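/- Let κ > 0 and δ > 0, and set W(r) := 8κ²·δ·r^{2κ−2}/(δ + r^{2κ})² and η(r) := r^κ/(δ + r^{2κ}). Then: (i) (r·η′(r))′ + r·( W(r) − κ²/r² )·η(r) = 0 for all r > 0; (ii) if β < 0 and ψ : (0,∞) → ℝ is twice continuously differentiable, not identically zero, with ∫₀^∞ ( r·ψ′(r)² + r^{−1}·ψ(r)² ) dr < ∞, and (r·ψ′(r))′ + r·( W(r) + β/r² )·ψ(r) = 0 for all r > 0, then β = −κ² and ψ is a scalar multiple of η. (Thus β = −κ² is the only negative eigenvalue of the singular limit problem and it is simple.) -/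

import Mathlib

open Real Set Filter MeasureTheory

/-! Set `g = -rη'/η`. Then `r g' = κ² - g²` and `r² W = 2 (κ² - g²)`, so the operator is of
Pöschl–Teller type in the variable `log r`. The Darboux transform `v = r ψ' + g ψ` removes the
weight: if `ψ` solves the problem with parameter `β`, then `v` solves the Euler equation
`(r v')' + (β / r) v = 0`, whose solutions for `β < 0` are combinations of `r^{±√(-β)}`. The energy
of `ψ` controls `∫ v² / r`, which is infinite for every nonzero combination, so `v = 0`. Thus
`r ψ' = -g ψ`, the first-order equation satisfied by `η`: hence `ψ` is a multiple of `η`, and `β`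
must be the eigenvalue `-κ²` of `η`. -/

theorem exists_eq_const_mul_of_hasDerivAt_mul {𝕜 : Type*} [RCLike 𝕜] {s : Set 𝕜}
    (hs : IsOpen s) (hs' : IsPreconnected s) {a f h : 𝕜 → 𝕜}
    (hf : ∀ x ∈ s, HasDerivAt f (a x * f x) x) (hh : ∀ x ∈ s, HasDerivAt h (a x * h x) x)
    (h0 : ∀ x ∈ s, h x ≠ 0) :
    ∃ c, ∀ x ∈ s, f x = c * h x := by
  have hquot : ∀ x ∈ s, HasDerivAt (f / h) 0 x := fun x hx =>
    ((hf x hx).div (hh x hx) (h0 x hx)).congr_deriv (by ring)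
  obtain ⟨c, hc⟩ := hs.exists_is_const_of_deriv_eq_zero hs'
    (fun x hx => (hquot x hx).differentiableAt.differentiableWithinAt)
    (fun x hx => (hquot x hx).deriv)
  exact ⟨c, fun x hx => (div_eq_iff (h0 x hx)).1 (hc x hx)⟩

theorem hasDerivAt_rpow_const_div (a : ℝ) {x : ℝ} (hx : x ≠ 0) :
    HasDerivAt (fun y => y ^ a) (a / x * x ^ a) x := by
  refine (hasDerivAt_rpow_const (Or.inl hx)).congr_deriv ?_
  rw [rpow_sub_one hx]
  ring

/-- `φ` solves the radial equation `(r φ')' + r V φ = 0` on `(0, ∞)`, with the differentiability of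
`φ` and of the flux `r φ'` made part of the notion, since `deriv` alone would be a junk value. -/
structure IsRadialSolution (V φ : ℝ → ℝ) : Prop where
  hasDerivAt : ∀ x > 0, HasDerivAt φ (deriv φ x) x
  hasDerivAt_flux : ∀ x > 0, HasDerivAt (fun y => y * deriv φ y) (-(x * V x * φ x)) x

namespace IsRadialSolution

variable {V V' φ p : ℝ → ℝ}

theorem congr (hφ : IsRadialSolution V φ) (hV : ∀ x > 0, V x = V' x) : IsRadialSolution V' φ where
  hasDerivAt := hφ.hasDerivAt
  hasDerivAt_flux x hx := hV x hx ▸ hφ.hasDerivAt_flux x hx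

theorem of_hasDerivAt (hφ : ∀ x > 0, HasDerivAt φ (p x / x) x)
    (hp : ∀ x > 0, HasDerivAt p (-(x * V x * φ x)) x) : IsRadialSolution V φ where
  hasDerivAt x hx := (hφ x hx).differentiableAt.hasDerivAt
  hasDerivAt_flux x hx := by
    refine (hp x hx).congr_of_eventuallyEq ?_
    filter_upwards [Ioi_mem_nhds hx] with y hy
    rw [(hφ y hy).deriv, mul_div_cancel₀ _ (ne_of_gt hy)]

theorem of_contDiffOn (hφ : ContDiffOn ℝ 2 φ (Ioi 0))
    (hode : ∀ r > 0, deriv (fun x => x * deriv φ x) r + r * V r * φ r = 0) :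
    IsRadialSolution V φ where
  hasDerivAt x hx :=
    ((hφ.differentiableOn two_ne_zero).differentiableAt (Ioi_mem_nhds hx)).hasDerivAt
  hasDerivAt_flux x hx := by
    have hφ' : DifferentiableOn ℝ (deriv φ) (Ioi 0) :=
      (hφ.deriv_of_isOpen (m := 1) isOpen_Ioi (by norm_num)).differentiableOn one_ne_zero
    rw [← eq_neg_of_add_eq_zero_left (hode x hx)]
    exact (differentiableAt_id.mul (hφ'.differentiableAt (Ioi_mem_nhds hx))).hasDerivAt

theorem deriv_flux_add_eq_zero (hφ : IsRadialSolution V φ) {r : ℝ} (hr : 0 < r) :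
    deriv (fun x => x * deriv φ x) r + r * V r * φ r = 0 := by
  rw [(hφ.hasDerivAt_flux r hr).deriv, neg_add_cancel]

theorem continuousOn (hφ : IsRadialSolution V φ) : ContinuousOn φ (Ioi 0) :=
  fun x hx => (hφ.hasDerivAt x hx).continuousAt.continuousWithinAt

end IsRadialSolution

section Euler

variable {μ : ℝ} {v : ℝ → ℝ}

theorem IsRadialSolution.exists_eq_rpow_add_rpow (hμ : μ ≠ 0)
    (hv : IsRadialSolution (fun x => -μ ^ 2 / x ^ 2) v) :
    ∃ C D, ∀ x > 0, v x = C * x ^ μ + D * x ^ (-μ) := by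
  -- `(r d/dr)² - ν² = (r d/dr - ν)(r d/dr + ν)`
  have hfactor : ∀ ν, ν ^ 2 = μ ^ 2 → ∃ c, ∀ x > 0, x * deriv v x + ν * v x = c * x ^ ν := by
    intro ν hν
    refine exists_eq_const_mul_of_hasDerivAt_mul (a := fun x => ν / x) isOpen_Ioi
      isPreconnected_Ioi (fun x (hx : 0 < x) => ?_)
      (fun x hx => hasDerivAt_rpow_const_div ν (ne_of_gt hx))
      (fun x hx => (rpow_pos_of_pos hx ν).ne')
    refine ((hv.hasDerivAt_flux x hx).add ((hv.hasDerivAt x hx).const_mul ν)).congr_deriv ?_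
    rw [← hν]
    field_simp
    ring
  obtain ⟨C, hC⟩ := hfactor μ rfl
  obtain ⟨D, hD⟩ := hfactor (-μ) (neg_sq μ)
  refine ⟨C / (2 * μ), -D / (2 * μ), fun x hx => ?_⟩
  field_simp
  linear_combination hC x hx - hD x hx

theorem eq_zero_and_eq_zero_of_integrableOn_rpow_add_rpow_sq_div (hμ : 0 < μ) {C D : ℝ}
    (hint : IntegrableOn (fun x => (C * x ^ μ + D * x ^ (-μ)) ^ 2 / x) (Ioi 0)) :
    C = 0 ∧ D = 0 := by
  have hsq : ∀ ν x : ℝ, 0 < x → x ^ (2 * ν - 1) = (x ^ ν) ^ 2 / x := fun ν x hx => by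
    rw [rpow_sub_one hx.ne', mul_comm, rpow_mul hx.le, rpow_two]
  have hC : C = 0 := by
    by_contra hC
    have hdecay : IntegrableOn (fun x : ℝ => x ^ (2 * -μ - 1)) (Ioi 1) :=
      integrableOn_Ioi_rpow_of_lt (by linarith) one_pos
    have hbound : IntegrableOn (fun x : ℝ => 2 * ((C * x ^ μ + D * x ^ (-μ)) ^ 2 / x)
        + 2 * D ^ 2 * x ^ (2 * -μ - 1)) (Ioi 1) :=
      ((hint.mono_set (Ioi_subset_Ioi zero_le_one)).const_mul 2).add (hdecay.const_mul _)
    have hgrowth : IntegrableOn (fun x : ℝ => C ^ 2 * x ^ (2 * μ - 1)) (Ioi 1) := by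
      refine hbound.mono' (by fun_prop) ((ae_restrict_mem measurableSet_Ioi).mono fun x hx => ?_)
      have hx0 : 0 < x := one_pos.trans hx
      rw [norm_of_nonneg (by positivity), hsq μ x hx0, hsq (-μ) x hx0]
      field_simp
      nlinarith [sq_nonneg (C * x ^ μ + 2 * (D * x ^ (-μ)))]
    have := (integrableOn_Ioi_rpow_iff one_pos).1
      ((integrable_const_mul_iff (pow_ne_zero 2 hC).isUnit _).1 hgrowth)
    linarith
  refine ⟨hC, ?_⟩
  by_contra hD
  have hpow : IntegrableOn (fun x => D ^ 2 * x ^ (2 * -μ - 1)) (Ioi 0) :=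
    hint.congr_fun (fun x hx => by simp only [hC, hsq (-μ) x hx]; ring) measurableSet_Ioi
  exact not_integrableOn_Ioi_rpow _
    ((integrable_const_mul_iff (pow_ne_zero 2 hD).isUnit _).1 hpow)

theorem IsRadialSolution.eq_zero_of_integrableOn_sq_div {β : ℝ} (hβ : β < 0)
    (hv : IsRadialSolution (fun x => β / x ^ 2) v)
    (hint : IntegrableOn (fun x => v x ^ 2 / x) (Ioi 0)) :
    ∀ x > 0, v x = 0 := by
  have hμ : 0 < √(-β) := sqrt_pos.2 (neg_pos.2 hβ)
  obtain ⟨C, D, hCD⟩ := IsRadialSolution.exists_eq_rpow_add_rpow hμ.ne'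
    (hv.congr fun x _ => by rw [sq_sqrt (neg_nonneg.2 hβ.le), neg_neg])
  obtain ⟨rfl, rfl⟩ := eq_zero_and_eq_zero_of_integrableOn_rpow_add_rpow_sq_div
    (C := C) (D := D) hμ
    (hint.congr_fun (fun x hx => by simp only [hCD x hx]) measurableSet_Ioi)
  intro x hx
  rw [hCD x hx, zero_mul, zero_mul, add_zero]

end Euler

/-- The Darboux transform `r φ' + g φ` of `φ` with superpotential `g`, which removes the weight from
the radial equation when `g` solves the Riccati equation `r g' = k - g²`. -/
noncomputable def darboux (g φ : ℝ → ℝ) (x : ℝ) : ℝ := x * deriv φ x + g x * φ x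

theorem integrableOn_darboux_sq_div {g φ : ℝ → ℝ} {M : ℝ} (hg : ContinuousOn g (Ioi 0))
    (hM : ∀ x > 0, g x ^ 2 ≤ M) (hφ : ContinuousOn φ (Ioi 0))
    (hint : IntegrableOn (fun r => r * deriv φ r ^ 2 + φ r ^ 2 / r) (Ioi 0)) :
    IntegrableOn (fun x => darboux g φ x ^ 2 / x) (Ioi 0) := by
  have hmeas : AEStronglyMeasurable (fun x => darboux g φ x ^ 2 / x) (volume.restrict (Ioi 0)) := by
    have hgφ := ((hg.mul hφ).aestronglyMeasurable (μ := volume) measurableSet_Ioi).aemeasurable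
    exact (((measurable_id.mul (measurable_deriv φ)).aemeasurable.add hgφ).pow_const 2
      |>.div aemeasurable_id).aestronglyMeasurable
  refine (hint.const_mul (2 * (1 + M))).mono' hmeas
    ((ae_restrict_mem measurableSet_Ioi).mono fun x (hx : 0 < x) => ?_)
  have hM0 : 0 ≤ M := (sq_nonneg _).trans (hM x hx)
  rw [norm_of_nonneg (by positivity)]
  calc darboux g φ x ^ 2 / x
      ≤ 2 * ((x * deriv φ x) ^ 2 + (g x * φ x) ^ 2) / x := by
        gcongr
        exact add_sq_le
    _ = 2 * (x * deriv φ x ^ 2 + g x ^ 2 * (φ x ^ 2 / x)) := by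
        field_simp
    _ ≤ 2 * (x * deriv φ x ^ 2 + M * (φ x ^ 2 / x)) := by
        gcongr
        exact hM x hx
    _ ≤ 2 * (1 + M) * (x * deriv φ x ^ 2 + φ x ^ 2 / x) := by
        have hkin : 0 ≤ M * (x * deriv φ x ^ 2) := by positivity
        have hpot : 0 ≤ φ x ^ 2 / x := by positivity
        linarith

theorem IsRadialSolution.hasDerivAt_neg_mul_of_darboux_eq_zero {V g φ : ℝ → ℝ}
    (hφ : IsRadialSolution V φ) (hker : ∀ x > 0, darboux g φ x = 0) :
    ∀ x > 0, HasDerivAt φ (-g x / x * φ x) x := by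
  intro x hx
  refine (hφ.hasDerivAt x hx).congr_deriv ?_
  have := hker x hx
  unfold darboux at this
  field_simp
  linarith

section Riccati

variable {k β : ℝ} {g φ : ℝ → ℝ}

theorem isRadialSolution_of_hasDerivAt_neg_mul
    (hg : ∀ x > 0, HasDerivAt g ((k - g x ^ 2) / x) x)
    (hφ : ∀ x > 0, HasDerivAt φ (-g x / x * φ x) x) :
    IsRadialSolution (fun x => 2 * (k - g x ^ 2) / x ^ 2 - k / x ^ 2) φ := by
  refine .of_hasDerivAt (p := fun x => -(g x * φ x))
    (fun x hx => (hφ x hx).congr_deriv (by ring)) fun x hx => ?_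
  refine ((hg x hx).mul (hφ x hx)).neg.congr_deriv ?_
  field_simp
  ring

namespace IsRadialSolution

theorem isRadialSolution_darboux
    (hφ : IsRadialSolution (fun x => 2 * (k - g x ^ 2) / x ^ 2 + β / x ^ 2) φ)
    (hg : ∀ x > 0, HasDerivAt g ((k - g x ^ 2) / x) x) :
    IsRadialSolution (fun x => β / x ^ 2) (darboux g φ) := by
  have hv : ∀ x > 0, HasDerivAt (darboux g φ) ((g x * darboux g φ x - (k + β) * φ x) / x) x := by
    intro x hx
    refine ((hφ.hasDerivAt_flux x hx).add ((hg x hx).mul (hφ.hasDerivAt x hx))).congr_deriv ?_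
    unfold darboux
    field_simp
    ring
  refine .of_hasDerivAt hv fun x hx => ?_
  refine (((hg x hx).mul (hv x hx)).sub ((hφ.hasDerivAt x hx).const_mul (k + β))).congr_deriv ?_
  unfold darboux
  field_simp
  ring

theorem darboux_eq_zero
    (hφ : IsRadialSolution (fun x => 2 * (k - g x ^ 2) / x ^ 2 + β / x ^ 2) φ)
    (hg : ∀ x > 0, HasDerivAt g ((k - g x ^ 2) / x) x)
    (hβ : β < 0) {M : ℝ} (hM : ∀ x > 0, g x ^ 2 ≤ M)
    (hint : IntegrableOn (fun r => r * deriv φ r ^ 2 + φ r ^ 2 / r) (Ioi 0)) :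
    ∀ x > 0, darboux g φ x = 0 :=
  (hφ.isRadialSolution_darboux hg).eq_zero_of_integrableOn_sq_div hβ <|
    integrableOn_darboux_sq_div
      (fun x hx => (hg x hx).continuousAt.continuousWithinAt) hM hφ.continuousOn hint

theorem eq_neg_of_darboux_eq_zero
    (hφ : IsRadialSolution (fun x => 2 * (k - g x ^ 2) / x ^ 2 + β / x ^ 2) φ)
    (hg : ∀ x > 0, HasDerivAt g ((k - g x ^ 2) / x) x)
    (hker : ∀ x > 0, darboux g φ x = 0) {r : ℝ} (hr : 0 < r) (hφr : φ r ≠ 0) : β = -k := by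
  have hφ' := isRadialSolution_of_hasDerivAt_neg_mul hg
    (hφ.hasDerivAt_neg_mul_of_darboux_eq_zero hker)
  have hflux := (hφ.hasDerivAt_flux r hr).unique (hφ'.hasDerivAt_flux r hr)
  field_simp at hflux
  linarith

end IsRadialSolution

end Riccati

/-- The weight `W = e^Z` of the singular Liouville equation. -/
noncomputable def liouvilleWeight (κ δ r : ℝ) : ℝ :=
  8 * κ ^ 2 * δ * r ^ (2 * κ - 2) / (δ + r ^ (2 * κ)) ^ 2

/-- The eigenfunction `η` of the singular limit problem for the eigenvalue `-κ²`. -/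
noncomputable def groundState (κ δ r : ℝ) : ℝ := r ^ κ / (δ + r ^ (2 * κ))

/-- The superpotential `g = -r η' / η` of the ground state `η`; for `δ > 0` it is
`κ tanh (κ log r - log δ / 2)`. -/
noncomputable def superpotential (κ δ r : ℝ) : ℝ := κ * ((r ^ (2 * κ) - δ) / (r ^ (2 * κ) + δ))

section Liouville

variable {κ δ x : ℝ}

theorem groundState_pos (hδ : 0 < δ) (hx : 0 < x) : 0 < groundState κ δ x := by
  unfold groundState
  positivity

theorem superpotential_sq_le (hδ : 0 < δ) (hx : 0 < x) : superpotential κ δ x ^ 2 ≤ κ ^ 2 := by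
  have hq : 0 < x ^ (2 * κ) := rpow_pos_of_pos hx _
  have hratio : ((x ^ (2 * κ) - δ) / (x ^ (2 * κ) + δ)) ^ 2 ≤ 1 := by
    rw [div_pow, div_le_one (by positivity)]
    nlinarith [mul_pos hq hδ]
  rw [superpotential, mul_pow]
  exact mul_le_of_le_one_right (sq_nonneg κ) hratio

theorem hasDerivAt_superpotential (hδ : 0 < δ) (hx : 0 < x) :
    HasDerivAt (superpotential κ δ) ((κ ^ 2 - superpotential κ δ x ^ 2) / x) x := by
  have hpow := hasDerivAt_rpow_const_div (2 * κ) hx.ne'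
  refine (((hpow.sub_const δ).div (hpow.add_const δ) (by positivity)).const_mul κ).congr_deriv ?_
  unfold superpotential
  field_simp
  ring

theorem hasDerivAt_groundState (hδ : 0 < δ) (hx : 0 < x) :
    HasDerivAt (groundState κ δ) (-superpotential κ δ x / x * groundState κ δ x) x := by
  refine ((hasDerivAt_rpow_const_div κ hx.ne').div
    ((hasDerivAt_rpow_const_div (2 * κ) hx.ne').const_add δ) (by positivity)).congr_deriv ?_
  unfold superpotential groundState
  field_simp
  ring

theorem liouvilleWeight_eq (hδ : 0 < δ) (hx : 0 < x) :
    liouvilleWeight κ δ x = 2 * (κ ^ 2 - superpotential κ δ x ^ 2) / x ^ 2 := by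
  rw [liouvilleWeight, superpotential, rpow_sub hx, rpow_two]
  field_simp
  ring

theorem isRadialSolution_groundState (hδ : 0 < δ) :
    IsRadialSolution (fun x => liouvilleWeight κ δ x - κ ^ 2 / x ^ 2) (groundState κ δ) :=
  (isRadialSolution_of_hasDerivAt_neg_mul (fun _ => hasDerivAt_superpotential hδ)
    fun _ => hasDerivAt_groundState hδ).congr fun _ hx => by rw [liouvilleWeight_eq hδ hx]

end Liouville

/-- For `κ, δ > 0` and `W(r) = 8κ²δ r^{2κ−2}/(δ+r^{2κ})²`, the function
`η(r) = r^κ/(δ+r^{2κ})` solves `−(rη′)′ = r(W − κ²/r²)η`, and `β = −κ²` is the only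
negative eigenvalue of the singular limit problem with finite weighted energy; it is
simple. -/
theorem singular_limit_problem_unique_negative_eigenvalue
    (κ δ : ℝ) (hκ : 0 < κ) (hδ : 0 < δ)
    (W η : ℝ → ℝ)
    (hW : ∀ r : ℝ, W r = 8 * κ ^ 2 * δ * r ^ (2 * κ - 2) / (δ + r ^ (2 * κ)) ^ 2)
    (hη : ∀ r : ℝ, η r = r ^ κ / (δ + r ^ (2 * κ))) :
    (∀ r > (0:ℝ),
      deriv (fun x => x * deriv η x) r + r * (W r - κ ^ 2 / r ^ 2) * η r = 0) ∧
    (∀ β : ℝ, β < 0 → ∀ ψ : ℝ → ℝ, ContDiffOn ℝ 2 ψ (Ioi 0) →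
      (∃ r > (0:ℝ), ψ r ≠ 0) →
      IntegrableOn (fun r => r * deriv ψ r ^ 2 + ψ r ^ 2 / r) (Ioi 0) →
      (∀ r > (0:ℝ),
        deriv (fun x => x * deriv ψ x) r + r * (W r + β / r ^ 2) * ψ r = 0) →
      β = -κ ^ 2 ∧ ∃ c : ℝ, ∀ r > (0:ℝ), ψ r = c * η r) := by
  obtain rfl : W = liouvilleWeight κ δ := funext hW
  obtain rfl : η = groundState κ δ := funext hη
  refine ⟨fun r hr => (isRadialSolution_groundState hδ).deriv_flux_add_eq_zero hr, ?_⟩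
  rintro β hβ ψ hψ ⟨r, hr, hψr⟩ hint hode
  have hg : ∀ x > 0, HasDerivAt (superpotential κ δ) _ x := fun _ => hasDerivAt_superpotential hδ
  have hsol : IsRadialSolution
      (fun x => 2 * (κ ^ 2 - superpotential κ δ x ^ 2) / x ^ 2 + β / x ^ 2) ψ :=
    (IsRadialSolution.of_contDiffOn hψ hode).congr fun x hx => by rw [liouvilleWeight_eq hδ hx]
  have hker : ∀ x > 0, darboux (superpotential κ δ) ψ x = 0 :=
    hsol.darboux_eq_zero hg hβ (fun _ => superpotential_sq_le hδ) hint
  exact ⟨hsol.eq_neg_of_darboux_eq_zero hg hker hr hψr,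
    exists_eq_const_mul_of_hasDerivAt_mul isOpen_Ioi isPreconnected_Ioi
      (hsol.hasDerivAt_neg_mul_of_darboux_eq_zero hker) (fun _ => hasDerivAt_groundState hδ)
      fun _ hx => (groundState_pos hδ hx).ne'⟩
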